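/- arXiv:2106.07194 — 2 statements merged into one kernel-verified Lean document; each statement's English description precedes it below -/
import Mathlib

section
/- Let a ≤ b be real numbers, I = [a,b], and κ ≥ 0. Let F denote the set of functions φ : I → ℝ that are monotone nondecreasing, upper semicontinuous on I, and satisfy 0 ≤ φ(t) ≤ κ for all t ∈ I, equipped with the pointwise partial order. Then F is a complete lattice: F is nonempty, and every nonempty subset E of F has a greatest lower bound and a least upper bound belonging to F with respect to the pointwise order. -/
open Set

/-- Upper semicontinuity on a set, ε-δ form. -/
def USCOn (f : ℝ → ℝ) (I : Set ℝ) : Prop :=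
  ∀ t₀ ∈ I, ∀ ε > 0, ∃ δ > 0, ∀ t ∈ I, |t - t₀| < δ → f t ≤ f t₀ + ε

/-- The family of monotone nondecreasing, USC functions on `[a,b]` with values in `[0,κ]`. -/
def Fop (a b κ : ℝ) : Set (ℝ → ℝ) :=
  {φ | MonotoneOn φ (Icc a b) ∧ USCOn φ (Icc a b) ∧ ∀ t ∈ Icc a b, 0 ≤ φ t ∧ φ t ≤ κ}

/-!
A pointwise infimum of monotone, upper semicontinuous functions is again monotone and upper
semicontinuous, so infima are computed pointwise. A pointwise supremum need not be upper
semicontinuous; the least upper bound is instead the pointwise infimum of all upper bounds in the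
family, of which the constant function with the maximal value is one.
-/

open scoped Topology

section Semicontinuity

variable {f : ℝ → ℝ} {I : Set ℝ}

theorem uscOn_iff_eventually_le_add :
    USCOn f I ↔ ∀ t₀ ∈ I, ∀ ε > 0, ∀ᶠ t in 𝓝[I] t₀, f t ≤ f t₀ + ε := by
  simp only [USCOn, eventually_nhdsWithin_iff, Metric.eventually_nhds_iff, Real.dist_eq]
  grind

theorem uscOn_iff_upperSemicontinuousOn : USCOn f I ↔ UpperSemicontinuousOn f I := by
  rw [uscOn_iff_eventually_le_add]
  constructor
  · intro h t₀ ht₀ y hy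
    filter_upwards [h t₀ ht₀ ((y - f t₀) / 2) (half_pos (sub_pos.2 hy))] with t ht
    linarith
  · intro h t₀ ht₀ ε hε
    exact (h t₀ ht₀ (f t₀ + ε) (lt_add_of_pos_right _ hε)).mono fun _ ht => ht.le

end Semicontinuity

theorem monotoneOn_ciInf {α β ι : Type*} [Preorder α] [ConditionallyCompleteLattice β]
    {s : Set α} {f : ι → α → β} (bdd : ∀ t ∈ s, BddBelow (range fun i => f i t))
    (hf : ∀ i, MonotoneOn (f i) s) : MonotoneOn (fun t => ⨅ i, f i t) s :=
  fun t ht _ hu htu => ciInf_mono (bdd t ht) fun i => hf i ht hu htu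

/-- The functions that on `s` are monotone, upper semicontinuous and take values in `[c, d]`:
the analogue of `Fop` for an arbitrary domain and codomain. As in `Fop`, functions are total and
their values off `s` are unconstrained. -/
def monotoneUSC {α β : Type*} [TopologicalSpace α] [Preorder α] [Preorder β]
    (s : Set α) (c d : β) : Set (α → β) :=
  {φ | MonotoneOn φ s ∧ UpperSemicontinuousOn φ s ∧ ∀ t ∈ s, φ t ∈ Icc c d}

theorem Fop_eq_monotoneUSC (a b κ : ℝ) : Fop a b κ = monotoneUSC (Icc a b) 0 κ := by
  simp only [Fop, monotoneUSC, uscOn_iff_upperSemicontinuousOn, mem_Icc]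

namespace monotoneUSC

variable {α β ι : Type*} [TopologicalSpace α] [Preorder α] {s : Set α}

theorem const_mem [Preorder β] {c d : β} (hcd : c ≤ d) :
    (fun _ => d) ∈ monotoneUSC s c d :=
  ⟨monotoneOn_const, upperSemicontinuousOn_const, fun _ _ => right_mem_Icc.2 hcd⟩

theorem bddBelow_range [Preorder β] {c d : β} {f : ι → α → β}
    (hf : ∀ i, f i ∈ monotoneUSC s c d) {t : α} (ht : t ∈ s) :
    BddBelow (range fun i => f i t) :=
  ⟨c, forall_mem_range.2 fun i => ((hf i).2.2 t ht).1⟩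

variable [ConditionallyCompleteLinearOrder β] {c d : β}

theorem ciInf_mem [Nonempty ι] {f : ι → α → β} (hf : ∀ i, f i ∈ monotoneUSC s c d) :
    (fun t => ⨅ i, f i t) ∈ monotoneUSC s c d := by
  have bdd : ∀ t ∈ s, BddBelow (range fun i => f i t) := fun _ => bddBelow_range hf
  refine ⟨monotoneOn_ciInf bdd fun i => (hf i).1,
    upperSemicontinuousOn_ciInf bdd fun i => (hf i).2.1, fun t ht => ⟨?_, ?_⟩⟩
  · exact le_ciInf fun i => ((hf i).2.2 t ht).1
  · exact (ciInf_le (bdd t ht) (Classical.arbitrary ι)).trans ((hf _).2.2 t ht).2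

theorem exists_isGLB_eval {E : Set (α → β)} (hE : E ⊆ monotoneUSC s c d) (hne : E.Nonempty) :
    ∃ Φ ∈ monotoneUSC s c d, ∀ t ∈ s, IsGLB ((fun φ => φ t) '' E) (Φ t) := by
  have : Nonempty E := hne.to_subtype
  have hmem : ∀ φ : E, φ.1 ∈ monotoneUSC s c d := fun φ => hE φ.2
  refine ⟨fun t => ⨅ φ : E, φ.1 t, ciInf_mem hmem, fun t ht => ?_⟩
  rw [image_eq_range]
  exact isGLB_ciInf (bddBelow_range hmem ht)

end monotoneUSC

theorem Fop_completeLattice_general {α β : Type*} [TopologicalSpace α] [Preorder α]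
    [ConditionallyCompleteLinearOrder β] (s : Set α) {c d : β} (hcd : c ≤ d) :
    (monotoneUSC s c d).Nonempty ∧
      ∀ E ⊆ monotoneUSC s c d, E.Nonempty →
        (∃ Φ ∈ monotoneUSC s c d, (∀ φ ∈ E, ∀ t ∈ s, Φ t ≤ φ t) ∧
          ∀ ψ ∈ monotoneUSC s c d, (∀ φ ∈ E, ∀ t ∈ s, ψ t ≤ φ t) → ∀ t ∈ s, ψ t ≤ Φ t) ∧
        (∃ Ψ ∈ monotoneUSC s c d, (∀ φ ∈ E, ∀ t ∈ s, φ t ≤ Ψ t) ∧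
          ∀ ψ ∈ monotoneUSC s c d, (∀ φ ∈ E, ∀ t ∈ s, φ t ≤ ψ t) → ∀ t ∈ s, Ψ t ≤ ψ t) := by
  refine ⟨⟨_, monotoneUSC.const_mem hcd⟩, fun E hE hne => ⟨?_, ?_⟩⟩
  · obtain ⟨Φ, hΦ, hglb⟩ := monotoneUSC.exists_isGLB_eval hE hne
    exact ⟨Φ, hΦ, fun φ hφ t ht => (hglb t ht).1 (mem_image_of_mem _ hφ),
      fun ψ _ hψ t ht => (hglb t ht).2 (forall_mem_image.2 fun φ hφ => hψ φ hφ t ht)⟩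
  · let U : Set (α → β) := {ψ ∈ monotoneUSC s c d | ∀ φ ∈ E, ∀ t ∈ s, φ t ≤ ψ t}
    have hU : U.Nonempty :=
      ⟨_, monotoneUSC.const_mem hcd, fun φ hφ t ht => ((hE hφ).2.2 t ht).2⟩
    obtain ⟨Ψ, hΨ, hglb⟩ := monotoneUSC.exists_isGLB_eval (sep_subset _ _ : U ⊆ _) hU
    exact ⟨Ψ, hΨ, fun φ hφ t ht => (hglb t ht).2 (forall_mem_image.2 fun ψ hψ => hψ.2 φ hφ t ht),
      fun ψ hψ hub t ht => (hglb t ht).1 (mem_image_of_mem _ ⟨hψ, hub⟩)⟩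

theorem Fop_completeLattice (a b κ : ℝ) (hab : a ≤ b) (hκ : 0 ≤ κ) :
    (Fop a b κ).Nonempty ∧
      ∀ E ⊆ Fop a b κ, E.Nonempty →
        (∃ Φ ∈ Fop a b κ, (∀ φ ∈ E, ∀ t ∈ Icc a b, Φ t ≤ φ t) ∧
          ∀ ψ ∈ Fop a b κ, (∀ φ ∈ E, ∀ t ∈ Icc a b, ψ t ≤ φ t) →
            ∀ t ∈ Icc a b, ψ t ≤ Φ t) ∧
        (∃ Ψ ∈ Fop a b κ, (∀ φ ∈ E, ∀ t ∈ Icc a b, φ t ≤ Ψ t) ∧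
          ∀ ψ ∈ Fop a b κ, (∀ φ ∈ E, ∀ t ∈ Icc a b, φ t ≤ ψ t) →
            ∀ t ∈ Icc a b, Ψ t ≤ ψ t) := by
  rw [Fop_eq_monotoneUSC]
  exact Fop_completeLattice_general (Icc a b) hκ
end

section
/- Let a ≤ b be real numbers, I = [a,b], and κ ≥ 0. Let F denote the set of functions φ : I → ℝ that are monotone nondecreasing, lower semicontinuous on I, and satisfy 0 ≤ φ(t) ≤ κ for all t ∈ I, equipped with the pointwise partial order. Then F is a complete lattice: F is nonempty, and every nonempty subset E of F has a greatest lower bound and a least upper bound belonging to F with respect to the pointwise order. -/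
open Set

/-- Lower semicontinuity on a set, ε-δ form. -/
def LSCOn (f : ℝ → ℝ) (I : Set ℝ) : Prop :=
  ∀ t₀ ∈ I, ∀ ε > 0, ∃ δ > 0, ∀ t ∈ I, |t - t₀| < δ → f t₀ - ε ≤ f t

/-- The family of monotone nondecreasing, LSC functions on `[a,b]` with values in `[0,κ]`. -/
def FopLSC (a b κ : ℝ) : Set (ℝ → ℝ) :=
  {φ | MonotoneOn φ (Icc a b) ∧ LSCOn φ (Icc a b) ∧ ∀ t ∈ Icc a b, 0 ≤ φ t ∧ φ t ≤ κ}

/-- `Ψ` is a least upper bound of `E` among the members of `F`, for the pointwise order on `s`.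
Values outside `s` are ignored, so such a `Ψ` is unique only up to equality on `s`. -/
def IsLUBOn {X R : Type*} [LE R] (s : Set X) (F E : Set (X → R)) (Ψ : X → R) : Prop :=
  Ψ ∈ F ∧ (∀ φ ∈ E, ∀ t ∈ s, φ t ≤ Ψ t) ∧
    ∀ ψ ∈ F, (∀ φ ∈ E, ∀ t ∈ s, φ t ≤ ψ t) → ∀ t ∈ s, Ψ t ≤ ψ t

/-- `Φ` is a greatest lower bound of `E` among the members of `F`, for the pointwise order on `s`;
the dual of `IsLUBOn`. -/
def IsGLBOn {X R : Type*} [LE R] (s : Set X) (F E : Set (X → R)) (Φ : X → R) : Prop :=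
  Φ ∈ F ∧ (∀ φ ∈ E, ∀ t ∈ s, Φ t ≤ φ t) ∧
    ∀ ψ ∈ F, (∀ φ ∈ E, ∀ t ∈ s, ψ t ≤ φ t) → ∀ t ∈ s, ψ t ≤ Φ t

/-- The functions that are monotone and lower semicontinuous on `s` with values in `[m, M]` there.
The family `FopLSC a b κ` is the case `s = [a, b]`, `m = 0`, `M = κ`. -/
def monotoneLSCOn {X R : Type*} [TopologicalSpace X] [Preorder X] [Preorder R]
    (s : Set X) (m M : R) : Set (X → R) :=
  {φ | MonotoneOn φ s ∧ LowerSemicontinuousOn φ s ∧ MapsTo φ s (Icc m M)}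

section RelativeBounds

variable {X R : Type*} {s : Set X} {F E : Set (X → R)}

theorem IsLUBOn.isGLBOn_of_lowerBounds [LE R] {Φ : X → R} (hE : E ⊆ F)
    (hΦ : IsLUBOn s F {ψ ∈ F | ∀ φ ∈ E, ∀ t ∈ s, ψ t ≤ φ t} Φ) : IsGLBOn s F E Φ := by
  obtain ⟨hΦF, hΦ_upper, hΦ_least⟩ := hΦ
  exact ⟨hΦF, fun φ hφ => hΦ_least φ (hE hφ) fun ψ hψ => hψ.2 φ hφ,
    fun ψ hψF hψ => hΦ_upper ψ ⟨hψF, hψ⟩⟩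

theorem isLUBOn_ciSup [ConditionallyCompleteLattice R] (hne : E.Nonempty)
    (bdd : ∀ t ∈ s, BddAbove (range fun φ : E => φ.1 t))
    (hF : (fun t => ⨆ φ : E, φ.1 t) ∈ F) : IsLUBOn s F E fun t => ⨆ φ : E, φ.1 t := by
  have : Nonempty E := hne.to_subtype
  exact ⟨hF, fun φ hφ t ht => le_ciSup (bdd t ht) ⟨φ, hφ⟩,
    fun ψ _ hψ t ht => ciSup_le fun φ => hψ φ.1 φ.2 t ht⟩

end RelativeBounds

theorem monotoneOn_ciSup {ι : Sort*} {X R : Type*} [Preorder X] [ConditionallyCompleteLattice R]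
    {s : Set X} {f : ι → X → R} (bdd : ∀ t ∈ s, BddAbove (range fun i => f i t))
    (hf : ∀ i, MonotoneOn (f i) s) : MonotoneOn (fun t => ⨆ i, f i t) s :=
  fun _ hx y hy hxy => ciSup_mono (bdd y hy) fun i => hf i hx hy hxy

section MonotoneLSC

variable {X R : Type*} [TopologicalSpace X] [Preorder X] {s : Set X}

theorem const_mem_monotoneLSCOn [Preorder R] {m M c : R} (hc : c ∈ Icc m M) :
    (fun _ => c) ∈ monotoneLSCOn s m M :=
  ⟨monotoneOn_const, lowerSemicontinuousOn_const, fun _ _ => hc⟩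

theorem bddAbove_range_of_subset_monotoneLSCOn [Preorder R] {m M : R} {E : Set (X → R)}
    (hE : E ⊆ monotoneLSCOn s m M) {t : X} (ht : t ∈ s) :
    BddAbove (range fun φ : E => φ.1 t) :=
  ⟨M, forall_mem_range.2 fun φ => ((hE φ.2).2.2 ht).2⟩

variable [ConditionallyCompleteLinearOrder R] {m M : R} {E : Set (X → R)}

theorem ciSup_mem_monotoneLSCOn (hE : E ⊆ monotoneLSCOn s m M) (hne : E.Nonempty) :
    (fun t => ⨆ φ : E, φ.1 t) ∈ monotoneLSCOn s m M := by
  have bdd : ∀ t ∈ s, BddAbove (range fun φ : E => φ.1 t) :=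
    fun t ht => bddAbove_range_of_subset_monotoneLSCOn hE ht
  refine ⟨monotoneOn_ciSup bdd fun φ => (hE φ.2).1,
    lowerSemicontinuousOn_ciSup bdd fun φ => (hE φ.2).2.1, fun t ht => ?_⟩
  have : Nonempty E := hne.to_subtype
  obtain ⟨φ, hφ⟩ := hne
  exact ⟨le_ciSup_of_le (bdd t ht) ⟨φ, hφ⟩ ((hE hφ).2.2 ht).1,
    ciSup_le fun χ => ((hE χ.2).2.2 ht).2⟩

theorem exists_isLUBOn_monotoneLSCOn (hE : E ⊆ monotoneLSCOn s m M) (hne : E.Nonempty) :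
    ∃ Ψ, IsLUBOn s (monotoneLSCOn s m M) E Ψ :=
  ⟨_, isLUBOn_ciSup hne (fun _ ht => bddAbove_range_of_subset_monotoneLSCOn hE ht)
    (ciSup_mem_monotoneLSCOn hE hne)⟩

-- The pointwise infimum need not be lower semicontinuous, so the greatest lower bound is taken
-- to be the supremum of all lower bounds in the family.
theorem exists_isGLBOn_monotoneLSCOn (hmM : m ≤ M) (hE : E ⊆ monotoneLSCOn s m M) :
    ∃ Φ, IsGLBOn s (monotoneLSCOn s m M) E Φ := by
  have hm : (fun _ => m) ∈ {ψ ∈ monotoneLSCOn s m M | ∀ φ ∈ E, ∀ t ∈ s, ψ t ≤ φ t} :=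
    ⟨const_mem_monotoneLSCOn (left_mem_Icc.2 hmM), fun φ hφ t ht => ((hE hφ).2.2 ht).1⟩
  obtain ⟨Φ, hΦ⟩ := exists_isLUBOn_monotoneLSCOn (sep_subset _ _) ⟨_, hm⟩
  exact ⟨Φ, hΦ.isGLBOn_of_lowerBounds hE⟩

end MonotoneLSC

theorem FopLSC_completeLattice_general {X R : Type*} [TopologicalSpace X] [Preorder X]
    [ConditionallyCompleteLinearOrder R] (s : Set X) {m M : R} (hmM : m ≤ M) :
    (monotoneLSCOn s m M).Nonempty ∧
      ∀ E ⊆ monotoneLSCOn s m M, E.Nonempty →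
        (∃ Φ, IsGLBOn s (monotoneLSCOn s m M) E Φ) ∧
        (∃ Ψ, IsLUBOn s (monotoneLSCOn s m M) E Ψ) :=
  ⟨⟨_, const_mem_monotoneLSCOn (left_mem_Icc.2 hmM)⟩, fun _ hE hne =>
    ⟨exists_isGLBOn_monotoneLSCOn hmM hE, exists_isLUBOn_monotoneLSCOn hE hne⟩⟩

theorem lscOn_iff_lowerSemicontinuousOn {f : ℝ → ℝ} {s : Set ℝ} :
    LSCOn f s ↔ LowerSemicontinuousOn f s := by
  refine forall₂_congr fun t₀ _ => ?_
  have eventually_iff (p : ℝ → Prop) :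
      (∀ᶠ t in nhdsWithin t₀ s, p t) ↔ ∃ δ > 0, ∀ t ∈ s, |t - t₀| < δ → p t := by
    simp only [eventually_nhdsWithin_iff, Metric.eventually_nhds_iff, Real.dist_eq]
    grind
  simp only [← eventually_iff]
  constructor
  · intro h y hy
    filter_upwards [h ((f t₀ - y) / 2) (by linarith)] with t ht
    linarith
  · intro h ε hε
    filter_upwards [h (f t₀ - ε) (sub_lt_self _ hε)] with t ht
    exact ht.le

theorem FopLSC_eq_monotoneLSCOn (a b κ : ℝ) : FopLSC a b κ = monotoneLSCOn (Icc a b) 0 κ := by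
  ext φ
  exact and_congr_right' (and_congr_left' lscOn_iff_lowerSemicontinuousOn)

theorem FopLSC_completeLattice (a b κ : ℝ) (hab : a ≤ b) (hκ : 0 ≤ κ) :
    (FopLSC a b κ).Nonempty ∧
      ∀ E ⊆ FopLSC a b κ, E.Nonempty →
        (∃ Φ ∈ FopLSC a b κ, (∀ φ ∈ E, ∀ t ∈ Icc a b, Φ t ≤ φ t) ∧
          ∀ ψ ∈ FopLSC a b κ, (∀ φ ∈ E, ∀ t ∈ Icc a b, ψ t ≤ φ t) →
            ∀ t ∈ Icc a b, ψ t ≤ Φ t) ∧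
        (∃ Ψ ∈ FopLSC a b κ, (∀ φ ∈ E, ∀ t ∈ Icc a b, φ t ≤ Ψ t) ∧
          ∀ ψ ∈ FopLSC a b κ, (∀ φ ∈ E, ∀ t ∈ Icc a b, φ t ≤ ψ t) →
            ∀ t ∈ Icc a b, Ψ t ≤ ψ t) := by
  rw [FopLSC_eq_monotoneLSCOn]
  exact FopLSC_completeLattice_general (Icc a b) hκ
end
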